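/- arXiv:2003.00093 — 3 statements merged into one kernel-verified Lean document; each statement's English description precedes it below -/
import Mathlib

section
/- Let 0 < b < a and A > 0, and let f : (0,a) → ℝ be differentiable with f > 0 on (0,a), f(s) → 0 as s → 0⁺, and f'(s) ≤ A for all s ∈ (0,a); assume f is continuous on (0,a). Then ∫_ε^b (1/f(s)) ds → +∞ as ε → 0⁺. -/
/-! Letting the left endpoint tend to `0` in the mean value inequality
`f s - f t ≤ A * (s - t)` gives the linear bound `f s ≤ A * s` on `(0, a)`. Hence
`1 / f s ≥ A⁻¹ * s⁻¹`, and integrating over `[ε, b]` bounds the integral from below by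
`A⁻¹ * log (b / ε)`, which tends to `+∞` as `ε → 0⁺`. -/

open Set Filter MeasureTheory intervalIntegral

/-- Analytic content of Proposition 2.2: if `f > 0` is differentiable on `(0,a)`, continuous
there, tends to `0` as `s → 0⁺`, and has derivative bounded above by `A`, then for `0 < b < a`
the integral `∫_ε^b (1/f s) ds` tends to `+∞` as `ε → 0⁺`. -/
theorem stmt2 (a b A : ℝ) (hb : 0 < b) (hba : b < a) (hA : 0 < A) (f : ℝ → ℝ)
    (hdiff : ∀ s ∈ Set.Ioo (0:ℝ) a, DifferentiableAt ℝ f s)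
    (hpos : ∀ s ∈ Set.Ioo (0:ℝ) a, 0 < f s)
    (hlim : Tendsto f (nhdsWithin (0:ℝ) (Set.Ioi 0)) (nhds 0))
    (hderiv : ∀ s ∈ Set.Ioo (0:ℝ) a, deriv f s ≤ A)
    (hcont : ContinuousOn f (Set.Ioo 0 a)) :
    Tendsto (fun ε => ∫ s in ε..b, 1 / f s) (nhdsWithin (0:ℝ) (Set.Ioi 0)) atTop := by
  have hlin : ∀ s ∈ Ioo (0:ℝ) a, f s ≤ A * s := by
    intro s hs
    have hid : Tendsto (fun t : ℝ => t) (nhdsWithin (0:ℝ) (Ioi 0)) (nhds 0) :=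
      tendsto_id.mono_left nhdsWithin_le_nhds
    have hrhs : Tendsto (fun t => f t + A * (s - t)) (nhdsWithin (0:ℝ) (Ioi 0))
        (nhds (0 + A * (s - 0))) :=
      hlim.add ((tendsto_const_nhds.sub hid).const_mul A)
    rw [zero_add, sub_zero] at hrhs
    refine ge_of_tendsto hrhs ?_
    filter_upwards [Ioo_mem_nhdsGT hs.1] with t ht
    have hmv := (convex_Ioo (0:ℝ) a).image_sub_le_mul_sub_of_deriv_le hcont
      (fun x hx => (hdiff x (interior_subset hx)).differentiableWithinAt)
      (fun x hx => hderiv x (interior_subset hx)) t ⟨ht.1, ht.2.trans hs.2⟩ s hs ht.2.le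
    linarith
  have hlog : Tendsto (fun ε : ℝ => A⁻¹ * (Real.log b - Real.log ε))
      (nhdsWithin (0:ℝ) (Ioi 0)) atTop := by
    refine Tendsto.const_mul_atTop (inv_pos.mpr hA) ?_
    simp only [sub_eq_add_neg]
    exact tendsto_atTop_add_const_left _ _
      (tendsto_neg_atBot_atTop.comp Real.tendsto_log_nhdsGT_zero)
  refine tendsto_atTop_mono' _ ?_ hlog
  filter_upwards [Ioo_mem_nhdsGT hb] with ε hε
  have hsub : Icc ε b ⊆ Ioo 0 a := fun x hx => ⟨hε.1.trans_le hx.1, hx.2.trans_lt hba⟩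
  have hne : (0:ℝ) ∉ uIcc ε b := by
    rw [uIcc_of_le hε.2.le]
    exact fun h => (hsub h).1.false
  calc A⁻¹ * (Real.log b - Real.log ε) = ∫ s in ε..b, A⁻¹ * s⁻¹ := by
        rw [intervalIntegral.integral_const_mul, integral_inv hne,
          Real.log_div hb.ne' hε.1.ne']
    _ ≤ ∫ s in ε..b, 1 / f s := by
        refine integral_mono_on hε.2.le ?_ ?_ ?_
        · exact (intervalIntegrable_inv (fun x hx h => hne (h ▸ hx)) continuousOn_id).const_mul _
        · refine ContinuousOn.intervalIntegrable ?_
          rw [uIcc_of_le hε.2.le]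
          exact continuousOn_const.div (hcont.mono hsub) fun x hx => (hpos x (hsub hx)).ne'
        · intro x hx
          rw [← mul_inv, ← one_div]
          exact one_div_le_one_div_of_le (hpos x (hsub hx)) (hlin x (hsub hx))
end

section
/- Let f : ℝ → ℝ satisfy f(r) − r² = O(r) as r → ∞, and define a(x) = √(f(cot x)) · sin²x for x near 0⁺. Then a(x) − x = O(x²) as x → 0⁺. -/
open Filter Asymptotics

/-!
With `r = cot x`, one has `a x - x = (√(f r) - r) sin² x + (sin x cos x - x)`.
Dividing `√y - r` by its conjugate gives `|√y - r| ≤ |y - r²| / r` for `r > 0`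
(`abs_sqrt_sub_mul_le`), so the hypothesis on `f` makes `√(f r) - r` bounded as `r → ∞`, that is,
as `x → 0⁺` (`tendsto_cot_atTop`). The first term is therefore `O(sin² x) = O(x²)`, and the second
is `O(x²)` by the Taylor bounds for `sin` and `cos`.
-/

/-- No sign condition on `y` is needed: for `y < 0` the left side is `r²`, while
`|y - r²| = r² + |y|`. -/
lemma abs_sqrt_sub_mul_le (y : ℝ) {r : ℝ} (hr : 0 < r) :
    |Real.sqrt y - r| * r ≤ |y - r ^ 2| := by
  rcases le_or_gt 0 y with hy | hy
  · have h : y - r ^ 2 = (Real.sqrt y - r) * (Real.sqrt y + r) := by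
      nlinarith [Real.sq_sqrt hy]
    have hs := Real.sqrt_nonneg y
    rw [h, abs_mul, abs_of_nonneg (by positivity : 0 ≤ Real.sqrt y + r)]
    gcongr
    linarith
  · rw [Real.sqrt_eq_zero_of_nonpos hy.le, zero_sub, abs_neg, abs_of_pos hr,
      abs_of_nonpos (by nlinarith)]
    nlinarith

lemma tendsto_cot_atTop : Tendsto Real.cot (nhdsWithin (0:ℝ) (Set.Ioi 0)) atTop := by
  have hsin : Tendsto Real.sin (nhdsWithin (0:ℝ) (Set.Ioi 0)) (nhdsWithin (0:ℝ) (Set.Ioi 0)) := by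
    refine tendsto_nhdsWithin_iff.2 ⟨?_, ?_⟩
    · simpa using (Real.continuous_sin.tendsto 0).mono_left nhdsWithin_le_nhds
    · filter_upwards [Ioo_mem_nhdsGT Real.pi_pos] with x hx
      exact Real.sin_pos_of_pos_of_lt_pi hx.1 hx.2
  have hcos : Tendsto Real.cos (nhdsWithin (0:ℝ) (Set.Ioi 0)) (nhds 1) := by
    simpa using (Real.continuous_cos.tendsto 0).mono_left nhdsWithin_le_nhds
  refine (hcos.pos_mul_atTop one_pos (tendsto_inv_nhdsGT_zero.comp hsin)).congr fun x => ?_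
  rw [Real.cot_eq_cos_div_sin, div_eq_mul_inv, Function.comp_apply]

lemma abs_sin_mul_cos_sub_le {x : ℝ} (h0 : 0 < x) (h1 : x < 1) :
    |Real.sin x * Real.cos x - x| ≤ x ^ 2 := by
  have hs := Real.sin_gt_sub_cube h0
  have hs' := Real.sin_lt h0
  have hc := Real.one_sub_sq_div_two_le_cos (x := x)
  have hc' := Real.cos_le_one x
  have hx2 : x ^ 2 < 1 := by nlinarith
  have hs0 : 0 < Real.sin x := by nlinarith
  have hprod : (x - x ^ 3 / 6) * (1 - x ^ 2 / 2) ≤ Real.sin x * Real.cos x :=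
    mul_le_mul hs.le hc (by linarith) hs0.le
  have hx3 : x ^ 3 ≤ x ^ 2 := by nlinarith [sq_nonneg x]
  have hx5 : 0 < x ^ 5 := by positivity
  rw [abs_le]
  constructor
  · nlinarith
  · nlinarith [sq_nonneg x]

/-- If `f(r) - r² = O(r)` as `r → ∞` and `a(x) = √(f(cot x)) · sin²x`, then
`a(x) - x = O(x²)` as `x → 0⁺`. -/
theorem stmt7 (f : ℝ → ℝ)
    (hf : (fun r : ℝ => f r - r ^ 2) =O[atTop] (fun r : ℝ => r))
    (a : ℝ → ℝ) (ha : a = fun x => Real.sqrt (f (Real.cot x)) * Real.sin x ^ 2) :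
    (fun x : ℝ => a x - x) =O[nhdsWithin (0:ℝ) (Set.Ioi 0)] (fun x : ℝ => x ^ 2) := by
  subst ha
  obtain ⟨C, hC⟩ := hf.bound
  refine IsBigO.of_bound (C + 1) ?_
  filter_upwards [tendsto_cot_atTop.eventually hC,
    tendsto_cot_atTop.eventually (eventually_gt_atTop 0),
    Ioo_mem_nhdsGT (zero_lt_one (α := ℝ))] with x hfx hr hx
  obtain ⟨h0, h1⟩ := hx
  rw [Real.norm_eq_abs, Real.norm_eq_abs, abs_of_pos hr] at hfx
  have hsqrt : |Real.sqrt (f (Real.cot x)) - Real.cot x| ≤ C :=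
    le_of_mul_le_mul_right ((abs_sqrt_sub_mul_le _ hr).trans hfx) hr
  have hs0 : 0 < Real.sin x := Real.sin_pos_of_pos_of_le_one h0 h1.le
  have hsx : Real.sin x ^ 2 ≤ x ^ 2 := pow_le_pow_left₀ hs0.le (Real.sin_lt h0).le 2
  have hsplit : Real.sqrt (f (Real.cot x)) * Real.sin x ^ 2 - x
      = (Real.sqrt (f (Real.cot x)) - Real.cot x) * Real.sin x ^ 2
        + (Real.sin x * Real.cos x - x) := by
    have hcot : Real.cot x * Real.sin x ^ 2 = Real.sin x * Real.cos x := by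
      rw [Real.cot_eq_cos_div_sin]
      field_simp
    linear_combination hcot
  rw [Real.norm_eq_abs, Real.norm_eq_abs, abs_of_nonneg (sq_nonneg x), hsplit]
  calc _ ≤ |(Real.sqrt (f (Real.cot x)) - Real.cot x) * Real.sin x ^ 2|
          + |Real.sin x * Real.cos x - x| := abs_add_le _ _
    _ ≤ C * x ^ 2 + x ^ 2 := by
        rw [abs_mul, abs_of_nonneg (sq_nonneg (Real.sin x))]
        exact add_le_add (mul_le_mul hsqrt hsx (sq_nonneg _) ((abs_nonneg _).trans hsqrt))
          (abs_sin_mul_cos_sub_le h0 h1)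
    _ = (C + 1) * x ^ 2 := by ring
end

section
/- Let x₀ > 0 and let a be continuous and strictly positive on (0, x₀] with a(x) − x = O(x²) as x → 0⁺. Define b(x) = exp(−∫_x^{x₀} dt/a(t)) for x ∈ (0, x₀]. Then b(x) → 0 as x → 0⁺, and there exists a constant c > 0 such that b(x)/x → c as x → 0⁺. -/
/-!
Near `0⁺` the hypothesis gives `|a t - t| ≤ C t²`, hence `a t ≥ t / 2`, so that
`g t = 1 / a t - 1 / t = (t - a t) / (a t * t)` stays bounded by `2 C`. Being continuous on
`(0, x₀]`, the function `g` is therefore integrable on `(0, x₀]`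
(`integrableOn_one_div_sub_one_div`). Splitting `1 / a = g + 1 / t` and integrating the second
term gives `b x / x = exp (-∫_x^{x₀} g) / x₀`, which converges to `exp (-∫_0^{x₀} g) / x₀ > 0` by
continuity of the primitive of `g`. The limit `b x → 0` follows on multiplying by `x`.
-/

open Set Filter MeasureTheory intervalIntegral Asymptotics

/-- The singularities of `1 / a` and `1 / t` at `0` cancel up to an integrable remainder. -/
lemma integrableOn_one_div_sub_one_div (x₀ : ℝ) (hx₀ : 0 < x₀) (a : ℝ → ℝ)
    (hcont : ContinuousOn a (Set.Ioc 0 x₀))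
    (hpos : ∀ x ∈ Set.Ioc (0:ℝ) x₀, 0 < a x)
    (hasym : (fun x : ℝ => a x - x) =O[nhdsWithin (0:ℝ) (Set.Ioi 0)] (fun x : ℝ => x ^ 2)) :
    IntegrableOn (fun t => 1 / a t - 1 / t) (Set.Ioc 0 x₀) := by
  have hg : ContinuousOn (fun t => 1 / a t - 1 / t) (Set.Ioc 0 x₀) :=
    (continuousOn_const.div hcont fun t ht => (hpos t ht).ne').sub
      (continuousOn_const.div continuousOn_id fun t ht => ht.1.ne')
  obtain ⟨C, hC, hbound⟩ := hasym.exists_pos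
  rw [IsBigOWith] at hbound
  obtain ⟨ε, hε, hεb⟩ := mem_nhdsGT_iff_exists_Ioc_subset.1 hbound
  have hε' : (0:ℝ) < ε := hε
  -- `δ ≤ 1 / (2 C)` guarantees `C t² ≤ t / 2`, hence `a t ≥ t / 2`, on `(0, δ]`.
  obtain ⟨δ, hδ, hδε, hδx, hδC⟩ : ∃ δ : ℝ, 0 < δ ∧ δ ≤ ε ∧ δ ≤ x₀ ∧ δ ≤ 1 / (2 * C) :=
    ⟨min ε (min x₀ (1 / (2 * C))), by positivity, min_le_left _ _,
      (min_le_right _ _).trans (min_le_left _ _), (min_le_right _ _).trans (min_le_right _ _)⟩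
  have h1 : IntegrableOn (fun t => 1 / a t - 1 / t) (Set.Ioc 0 δ) := by
    refine IntegrableOn.of_bound (by simp)
      ((hg.mono (Set.Ioc_subset_Ioc_right hδx)).aestronglyMeasurable measurableSet_Ioc) (2 * C) ?_
    filter_upwards [ae_restrict_mem measurableSet_Ioc] with t ht
    have ht0 : 0 < t := ht.1
    have hat := hpos t ⟨ht.1, ht.2.trans hδx⟩
    have hb : ‖a t - t‖ ≤ C * ‖t ^ 2‖ := hεb ⟨ht.1, ht.2.trans hδε⟩
    rw [Real.norm_eq_abs, Real.norm_eq_abs, abs_of_pos (by positivity : 0 < t ^ 2)] at hb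
    have htC : C * t ≤ 1 / 2 := by
      have := (le_div_iff₀ (by positivity)).1 (ht.2.trans hδC)
      linarith
    have hlow : t / 2 ≤ a t := by
      have := (abs_le.1 hb).1
      nlinarith
    have heq : 1 / a t - 1 / t = -(a t - t) / (a t * t) := by
      field_simp
      ring
    rw [heq, Real.norm_eq_abs, abs_div, abs_neg, abs_of_pos (mul_pos hat ht0),
      div_le_iff₀ (mul_pos hat ht0)]
    have : C * t * (t / 2) ≤ C * t * a t := by gcongr
    nlinarith
  have h2 : IntegrableOn (fun t => 1 / a t - 1 / t) (Set.Icc δ x₀) :=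
    (hg.mono fun t ht => ⟨hδ.trans_le ht.1, ht.2⟩).integrableOn_Icc
  refine (h1.union h2).mono_set fun t ht => ?_
  rcases le_total t δ with h | h
  · exact Or.inl ⟨ht.1, h⟩
  · exact Or.inr ⟨h, ht.2⟩



/-- If `a` is continuous and positive on `(0, x₀]` with `a(x) - x = O(x²)` as `x → 0⁺`, then
`b(x) = exp(-∫_x^{x₀} dt/a(t))` tends to `0` as `x → 0⁺` and `b(x)/x` tends to a positive
constant. -/
theorem stmt11 (x₀ : ℝ) (hx₀ : 0 < x₀) (a : ℝ → ℝ)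
    (hcont : ContinuousOn a (Set.Ioc 0 x₀))
    (hpos : ∀ x ∈ Set.Ioc (0:ℝ) x₀, 0 < a x)
    (hasym : (fun x : ℝ => a x - x) =O[nhdsWithin (0:ℝ) (Set.Ioi 0)] (fun x : ℝ => x ^ 2))
    (b : ℝ → ℝ) (hb : ∀ x ∈ Set.Ioc (0:ℝ) x₀, b x = Real.exp (-∫ t in x..x₀, 1 / a t)) :
    Tendsto b (nhdsWithin (0:ℝ) (Set.Ioi 0)) (nhds 0) ∧
      ∃ c : ℝ, 0 < c ∧
        Tendsto (fun x => b x / x) (nhdsWithin (0:ℝ) (Set.Ioi 0)) (nhds c) := by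
  have hint := integrableOn_one_div_sub_one_div x₀ hx₀ a hcont hpos hasym
  set g : ℝ → ℝ := fun t => 1 / a t - 1 / t with hg
  have hprim : Tendsto (fun x => ∫ t in x..x₀, g t) (nhdsWithin (0:ℝ) (Set.Ioi 0))
      (nhds (∫ t in (0:ℝ)..x₀, g t)) := by
    have hc : ContinuousOn (fun x => ∫ t in x..x₀, g t) (Set.uIcc 0 x₀) := by
      apply intervalIntegral.continuousOn_primitive_interval_left
      rwa [Set.uIcc_of_le hx₀.le, integrableOn_Icc_iff_integrableOn_Ioc]
    rw [Set.uIcc_of_le hx₀.le] at hc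
    exact (hc 0 ⟨le_rfl, hx₀.le⟩).mono_left
      (nhdsWithin_le_of_mem (Icc_mem_nhdsGT hx₀))
  have hquot : Tendsto (fun x => b x / x) (nhdsWithin (0:ℝ) (Set.Ioi 0))
      (nhds (Real.exp (-∫ t in (0:ℝ)..x₀, g t) / x₀)) := by
    refine Tendsto.congr' ?_
      (((Real.continuous_exp.tendsto _).comp hprim.neg).div_const x₀)
    filter_upwards [Ioc_mem_nhdsGT hx₀] with x hx
    have hx0 : 0 < x := hx.1
    have hig : IntervalIntegrable g volume x x₀ := by
      rw [intervalIntegrable_iff_integrableOn_Ioc_of_le hx.2]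
      exact hint.mono_set (Set.Ioc_subset_Ioc_left hx0.le)
    have hnot : (0:ℝ) ∉ Set.uIcc x x₀ := by
      rw [Set.uIcc_of_le hx.2]
      exact fun h => absurd h.1 (not_le.2 hx0)
    have hii : IntervalIntegrable (fun t : ℝ => 1 / t) volume x x₀ :=
      intervalIntegral.intervalIntegrable_one_div
        (fun t ht h => hnot (h ▸ ht)) continuousOn_id
    have hsplit : ∫ t in x..x₀, 1 / a t = (∫ t in x..x₀, g t) + Real.log (x₀ / x) := by
      rw [← integral_one_div hnot, ← intervalIntegral.integral_add hig hii]
      simp [hg]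
    rw [hb x hx, hsplit, neg_add, Real.exp_add, Real.exp_neg (Real.log _),
      Real.exp_log (by positivity)]
    simp only [Function.comp]
    field_simp
  refine ⟨?_, _, by positivity, hquot⟩
  have hid : Tendsto (fun x : ℝ => x) (nhdsWithin (0:ℝ) (Set.Ioi 0)) (nhds 0) :=
    tendsto_id.mono_left nhdsWithin_le_nhds
  have hmul := hquot.mul hid
  rw [mul_zero] at hmul
  refine hmul.congr' ?_
  filter_upwards [self_mem_nhdsWithin] with x hx
  exact div_mul_cancel₀ _ (ne_of_gt hx)
end
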